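/- Let (V, c) be a finite-dimensional braided vector space that is left triangular with respect to the totally ordered basis X, and let r be an admissible endomorphism of V⊗V. Then for every word u in letters from X, the element [u]_r is homogeneous of degree l(u) in the tensor algebra, and its lexicographically smallest monomial is u with coefficient 1; that is, [u]_r − u lies in the span k{w : w a word with l(w) = l(u) and w > u lexicographically}. -/

import Mathlib

/-!
We identify the finite-dimensional vector space `V` with basis `X` with the free
`k`-module on `X`, and the tensor power `V^{⊗n}` with the free `k`-module on the
words of length `n` in letters from `X`; correspondingly `V^{⊗n} ⊗ V^{⊗m}` is the
free `k`-module on pairs of words.  A linear endomorphism `c` of `V ⊗ V` is encoded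
by its matrix `c : X → X → ((X × X) →₀ k)`, via `c(x ⊗ y) = Σ_{(z,w)} c x y (z,w) • z ⊗ w`.
-/

variable {k : Type*} [Field k] {X : Type*} [Fintype X] [LinearOrder X]

/-- The maps `c_{1,m} : V ⊗ V^{⊗m} → V^{⊗m} ⊗ V`, defined on basis vectors by
`c_{1,0} = id` and `c_{1,m+1} = (id_V ⊗ c_{1,m}) ∘ (c ⊗ id_{V^{⊗m}})`. -/
noncomputable def braidOne (c : X → X → ((X × X) →₀ k)) :
    X → List X → ((List X × List X) →₀ k)
  | x, [] => Finsupp.single ([], [x]) 1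
  | x, y :: v =>
      (c x y).sum fun p a =>
        a • Finsupp.mapDomain (fun q : List X × List X => (p.1 :: q.1, q.2))
          (braidOne c p.2 v)

/-- Auxiliary version of `c_{n,m}` where the first word is given reversed:
`c_{0,m} = id` and `c_{n+1,m} = (c_{n,m} ⊗ id_V) ∘ (id_{V^{⊗n}} ⊗ c_{1,m})`. -/
noncomputable def braidRev (c : X → X → ((X × X) →₀ k)) :
    List X → List X → ((List X × List X) →₀ k)
  | [], v => Finsupp.single (v, []) 1
  | x :: urev, v =>
      (braidOne c x v).sum fun p a =>
        a • Finsupp.mapDomain (fun q : List X × List X => (q.1, q.2 ++ p.2))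
          (braidRev c urev p.1)

/-- The braiding maps `c_{n,m} : V^{⊗n} ⊗ V^{⊗m} → V^{⊗m} ⊗ V^{⊗n}` on basis vectors:
`braidWords c u v` is `c_{l(u),l(v)}(u ⊗ v)`. -/
noncomputable def braidWords (c : X → X → ((X × X) →₀ k)) (u v : List X) :
    (List X × List X) →₀ k :=
  braidRev c u.reverse v

/-- `c` is left triangular with respect to the ordered basis `X`:
`c(x ⊗ y) = γ_{x,y} • y ⊗ x + Σ_{z > y} z ⊗ v_{x,y,z}`, i.e. the coefficient of
`c(x ⊗ y)` at `z ⊗ w` vanishes unless `(z, w) = (y, x)` or `z > y`. -/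
def LeftTriangularMat (c : X → X → ((X × X) →₀ k)) : Prop :=
  ∀ (x y : X) (zw : X × X), c x y zw ≠ 0 → (zw.1 = y ∧ zw.2 = x) ∨ y < zw.1

/-- `c ⊗ id` acting on `V ⊗ V ⊗ V` (matrix form). -/
noncomputable def act12 (c : X → X → ((X × X) →₀ k)) (f : (X × X × X) →₀ k) :
    (X × X × X) →₀ k :=
  f.sum fun t a => a • ((c t.1 t.2.1).sum fun p b => Finsupp.single (p.1, p.2, t.2.2) b)

/-- `id ⊗ c` acting on `V ⊗ V ⊗ V` (matrix form). -/
noncomputable def act23 (c : X → X → ((X × X) →₀ k)) (f : (X × X × X) →₀ k) :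
    (X × X × X) →₀ k :=
  f.sum fun t a => a • ((c t.2.1 t.2.2).sum fun p b => Finsupp.single (t.1, p.1, p.2) b)

/-- `c` satisfies the braid equation
`(c ⊗ id)(id ⊗ c)(c ⊗ id) = (id ⊗ c)(c ⊗ id)(id ⊗ c)`. -/
def SatisfiesBraidEq (c : X → X → ((X × X) →₀ k)) : Prop :=
  ∀ f : (X × X × X) →₀ k,
    act12 c (act23 c (act12 c f)) = act23 c (act12 c (act23 c f))

/-- The linear extension of `c` to an endomorphism of `V ⊗ V`. -/
noncomputable def extendMat (c : X → X → ((X × X) →₀ k)) (f : (X × X) →₀ k) :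
    (X × X) →₀ k :=
  f.sum fun p a => a • c p.1 p.2

/-- The coefficient `γ_{u,v} = Π_{x ∈ u} Π_{y ∈ v} γ x y`. -/
def gammaWords (γ : X → X → k) (u v : List X) : k :=
  (u.map fun x => (v.map fun y => γ x y).prod).prod

/-- A word `u` is a Lyndon word if it is nonempty and lexicographically smaller than
each of its proper nonempty suffixes. -/
def IsLyndon {X : Type*} [LinearOrder X] (u : List X) : Prop :=
  u ≠ [] ∧ ∀ v w : List X, v ≠ [] → w ≠ [] → u = v ++ w → List.Lex (· < ·) u w

/-- `ls` is a Lyndon factorization of `u`: all factors are Lyndon words, the factors are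
(lexicographically) nonincreasing, and their concatenation is `u`. -/
def IsLyndonFactorization {X : Type*} [LinearOrder X] (ls : List (List X)) (u : List X) : Prop :=
  (∀ l ∈ ls, IsLyndon l) ∧ ls.Chain' (fun a b => ¬ List.Lex (· < ·) a b) ∧ ls.flatten = u

/-- `u = v ++ w` is the Shirshov decomposition of the Lyndon word `u`:
`w` is the longest proper nonempty suffix of `u` that is a Lyndon word. -/
def ShirshovSplit {X : Type*} [LinearOrder X] (u v w : List X) : Prop :=
  v ≠ [] ∧ w ≠ [] ∧ u = v ++ w ∧ IsLyndon w ∧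
    ∀ w' : List X, w' ≠ [] → IsLyndon w' →
      (∃ v' : List X, v' ≠ [] ∧ u = v' ++ w') → w'.length ≤ w.length

/-- The multiplication `V^{⊗n} ⊗ V^{⊗m} → V^{⊗(n+m)}` of the tensor algebra,
in the word model: concatenation of the two components. -/
noncomputable def mulWords {k : Type*} [Field k] {X : Type*} :
    ((List X × List X) →₀ k) → ((List X) →₀ k) :=
  Finsupp.mapDomain fun p : List X × List X => p.1 ++ p.2

/-- The tensor product of two elements of the tensor algebra, in the word model. -/
noncomputable def tensWords {k : Type*} [Field k] {X : Type*}
    (f g : (List X) →₀ k) : (List X × List X) →₀ k :=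
  f.sum fun u a => g.sum fun v b => Finsupp.single (u, v) (a * b)

/-- The linear extension of the braiding maps `c_{n,m}` to all of `T(V) ⊗ T(V)`
(applied degreewise), in the word model. -/
noncomputable def braidExt {k : Type*} [Field k] {X : Type*} [Fintype X] [LinearOrder X]
    (c : X → X → ((X × X) →₀ k)) (f : (List X × List X) →₀ k) :
    (List X × List X) →₀ k :=
  f.sum fun p a => a • braidWords c p.1 p.2

/-- `br` is the iterated-commutator map `u ↦ [u]_r` associated to the endomorphism `r`:
it satisfies the defining recursion of `[-]_r`. -/
def IsBracketing {k : Type*} [Field k] {X : Type*} [Fintype X] [LinearOrder X]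
    (r : X → X → ((X × X) →₀ k)) (br : List X → ((List X) →₀ k)) : Prop :=
  br [] = Finsupp.single [] 1 ∧
  (∀ x : X, br [x] = Finsupp.single [x] 1) ∧
  (∀ u v w : List X, IsLyndon u → ShirshovSplit u v w →
    br u = mulWords (tensWords (br v) (br w))
      - mulWords (braidExt r (tensWords (br v) (br w)))) ∧
  (∀ (l : List X) (ls : List (List X)) (u : List X), ls ≠ [] →
    IsLyndonFactorization (l :: ls) u →
    br u = mulWords (tensWords (br l) (br ls.flatten)))

/-- A strict lexicographic inequality against a word that is not longer survives arbitrary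
extensions of both words. -/
theorem lex_append_of_length_le {X : Type*} [LinearOrder X] {a b : List X}
    (h : List.Lex (· < ·) a b) (hl : b.length ≤ a.length) (s t : List X) :
    List.Lex (· < ·) (a ++ s) (b ++ t) := by
  induction h with
  | nil => simp at hl
  | rel h => exact .rel h
  | cons _ ih => exact .cons (ih (by simpa using hl))

theorem lex_append_left {X : Type*} [LinearOrder X] {s t : List X}
    (h : List.Lex (· < ·) s t) (a : List X) : List.Lex (· < ·) (a ++ s) (a ++ t) := by
  induction a with
  | nil => exact h
  | cons x a ih => exact .cons ih

theorem lex_prefix_or_append {X : Type*} [LinearOrder X] {a b : List X}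
    (h : List.Lex (· < ·) a b) :
    (∃ s, s ≠ [] ∧ b = a ++ s) ∨ ∀ s t, List.Lex (· < ·) (a ++ s) (b ++ t) := by
  induction h with
  | @nil x l => exact .inl ⟨x :: l, by simp, rfl⟩
  | rel h => exact .inr fun _ _ => .rel h
  | cons _ ih =>
    rcases ih with ⟨s, hs, rfl⟩ | ih
    · exact .inl ⟨s, hs, rfl⟩
    · exact .inr fun s t => .cons (ih s t)

theorem IsLyndon.append {X : Type*} [LinearOrder X] {l m : List X} (hl : IsLyndon l)
    (hm : IsLyndon m) (h : List.Lex (· < ·) l m) : IsLyndon (l ++ m) := by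
  have key : List.Lex (· < ·) (l ++ m) m := by
    rcases lex_prefix_or_append h with ⟨s, hs, rfl⟩ | h
    · exact lex_append_left (hm.2 l s hl.1 hs rfl) l
    · simpa using h m []
  refine ⟨by simp [hl.1], fun v w hv hw e => ?_⟩
  rcases List.append_eq_append_iff.1 e with ⟨s, rfl, rfl⟩ | ⟨s, rfl, rfl⟩
  · rcases eq_or_ne s [] with rfl | hs
    · simpa using key
    · exact lt_trans (α := List X) key (hm.2 s w hs hw rfl)
  · rcases eq_or_ne s [] with rfl | hs
    · simpa using key
    · exact lex_append_of_length_le (hl.2 v s hv hs rfl) (by simp) m m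

theorem isLyndon_singleton {X : Type*} [LinearOrder X] (x : X) : IsLyndon [x] := by
  refine ⟨by simp, fun v w hv hw e => ?_⟩
  rcases List.append_eq_singleton_iff.1 e.symm with ⟨h, -⟩ | ⟨-, h⟩
  · exact absurd h hv
  · exact absurd h hw

theorem exists_isLyndonFactorization_append {X : Type*} [LinearOrder X] (ls : List (List X)) :
    ∀ (l u : List X), IsLyndon l → IsLyndonFactorization ls u →
      ∃ ms, IsLyndonFactorization ms (l ++ u) := by
  induction ls with
  | nil =>
    rintro l u hl ⟨-, -, rfl⟩
    exact ⟨[l], by simpa using hl, List.isChain_singleton _, by simp⟩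
  | cons m ls ih =>
    rintro l u hl ⟨h₁, h₂, rfl⟩
    by_cases h : List.Lex (· < ·) l m
    · obtain ⟨ms, hms⟩ := ih (l ++ m) ls.flatten (hl.append (h₁ m (by simp)) h)
        ⟨fun a ha => h₁ a (by simp [ha]), h₂.tail, rfl⟩
      exact ⟨ms, by simpa using hms⟩
    · refine ⟨l :: m :: ls, ?_, List.isChain_cons_cons.2 ⟨h, h₂⟩, by simp⟩
      rintro a (_ | ⟨_, ha⟩)
      · exact hl
      · exact h₁ a ha

/-- Existence part of the Chen–Fox–Lyndon theorem. -/
theorem exists_isLyndonFactorization {X : Type*} [LinearOrder X] (u : List X) :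
    ∃ ls, IsLyndonFactorization ls u := by
  induction u with
  | nil => exact ⟨[], by simp, List.isChain_nil, rfl⟩
  | cons x u ih =>
    obtain ⟨ls, h⟩ := ih
    exact exists_isLyndonFactorization_append ls [x] u (isLyndon_singleton x) h

theorem exists_shirshovSplit {X : Type*} [LinearOrder X] {u : List X} (hu : 2 ≤ u.length) :
    ∃ v w, ShirshovSplit u v w := by
  classical
  let P : ℕ → Prop := fun n => ∃ v w : List X, v ≠ [] ∧ u = v ++ w ∧ IsLyndon w ∧ w.length = n
  have hne : u ≠ [] := by rintro rfl; simp at hu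
  have h1 : P 1 := by
    refine ⟨u.dropLast, [u.getLast hne], ?_, (List.dropLast_append_getLast hne).symm,
      isLyndon_singleton _, rfl⟩
    rw [← List.length_pos_iff, List.length_dropLast]
    omega
  obtain ⟨v, w, hv, e, hw, hn⟩ := Nat.findGreatest_spec (P := P) (by omega : 1 ≤ u.length) h1
  refine ⟨v, w, hv, hw.1, e, hw, ?_⟩
  rintro w' - hw' ⟨v', hv', e'⟩
  rw [hn]
  refine Nat.le_findGreatest ?_ ⟨v', w', hv', e', hw', rfl⟩
  rw [e', List.length_append]
  omega

/-- Words of the same length as `u` that are lexicographically larger than `u`. -/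
def wordsAbove {X : Type*} [LinearOrder X] (u : List X) : Set (List X) :=
  {w | w.length = u.length ∧ List.Lex (· < ·) u w}

/-- Words of the same length as `u` that are lexicographically at least `u`. -/
def wordsFrom {X : Type*} [LinearOrder X] (u : List X) : Set (List X) :=
  {w | w = u ∨ w ∈ wordsAbove u}

theorem length_eq_of_mem_wordsFrom {X : Type*} [LinearOrder X] {u w : List X}
    (h : w ∈ wordsFrom u) : w.length = u.length := by
  rcases h with rfl | h
  · rfl
  · exact h.1

theorem mem_wordsFrom_trans {X : Type*} [LinearOrder X] {u v w : List X}
    (h₁ : v ∈ wordsFrom u) (h₂ : w ∈ wordsFrom v) : w ∈ wordsFrom u := by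
  rcases h₁ with rfl | h₁
  · exact h₂
  rcases h₂ with rfl | h₂
  · exact .inr h₁
  · exact .inr ⟨h₂.1.trans h₁.1, lt_trans (α := List X) h₁.2 h₂.2⟩

theorem append_mem_wordsAbove_left {X : Type*} [LinearOrder X] {u v u' v' : List X}
    (hu : u' ∈ wordsAbove u) (hv : v'.length = v.length) : u' ++ v' ∈ wordsAbove (u ++ v) :=
  ⟨by simp [hu.1, hv], lex_append_of_length_le hu.2 hu.1.le _ _⟩

theorem append_mem_wordsAbove_right {X : Type*} [LinearOrder X] {v v' : List X} (u : List X)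
    (hv : v' ∈ wordsAbove v) : u ++ v' ∈ wordsAbove (u ++ v) :=
  ⟨by simp [hv.1], lex_append_left hv.2 _⟩

theorem Finsupp.sum_smul_mem {k : Type*} [Field k] {α M : Type*} [AddCommGroup M] [Module k M]
    (N : Submodule k M) (f : α →₀ k) (g : α → M) (h : ∀ a ∈ f.support, g a ∈ N) :
    (f.sum fun a b => b • g a) ∈ N :=
  N.sum_mem fun a ha => N.smul_mem _ (h a ha)

theorem mapDomain_mem_supported {k : Type*} [Field k] {α β : Type*} {s : Set α} {t : Set β}
    {f : α →₀ k} (g : α → β) (hf : f ∈ Finsupp.supported k k s) (h : ∀ a ∈ s, g a ∈ t) :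
    Finsupp.mapDomain g f ∈ Finsupp.supported k k t := by
  classical
  rw [Finsupp.mem_supported] at hf ⊢
  intro b hb
  obtain ⟨a, ha, rfl⟩ := Finset.mem_image.1 (Finsupp.mapDomain_support hb)
  exact h a (hf ha)

theorem tensWords_mem_supported {k : Type*} [Field k] {X : Type*} {s t : Set (List X)}
    {f g : List X →₀ k} (hf : f ∈ Finsupp.supported k k s) (hg : g ∈ Finsupp.supported k k t) :
    tensWords f g ∈ Finsupp.supported k k (s ×ˢ t) :=
  Submodule.sum_mem _ fun _ ha => Submodule.sum_mem _ fun _ hb =>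
    Finsupp.single_mem_supported _ _ ⟨hf ha, hg hb⟩

theorem tensWords_sub_left {k : Type*} [Field k] {X : Type*} (f f' g : List X →₀ k) :
    tensWords (f - f') g = tensWords f g - tensWords f' g := by
  unfold tensWords
  refine Finsupp.sum_sub_index fun a b₁ b₂ => ?_
  simp [sub_mul, Finsupp.sum, Finset.sum_sub_distrib]

theorem tensWords_sub_right {k : Type*} [Field k] {X : Type*} (f g g' : List X →₀ k) :
    tensWords f (g - g') = tensWords f g - tensWords f g' := by
  unfold tensWords
  rw [← Finsupp.sum_sub]
  refine Finsupp.sum_congr fun a _ => Finsupp.sum_sub_index fun c b₁ b₂ => ?_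
  simp [mul_sub]

theorem mulWords_sub {k : Type*} [Field k] {X : Type*} (f g : (List X × List X) →₀ k) :
    mulWords (f - g) = mulWords f - mulWords g :=
  (Finsupp.mapDomain.addMonoidHom fun p : List X × List X => p.1 ++ p.2).map_sub f g

theorem mem_supported_wordsFrom {k : Type*} [Field k] {X : Type*} [LinearOrder X]
    {u : List X} {f : List X →₀ k}
    (hf : f - Finsupp.single u 1 ∈ Finsupp.supported k k (wordsAbove u)) :
    f ∈ Finsupp.supported k k (wordsFrom u) := by
  rw [← sub_add_cancel f (Finsupp.single u 1)]
  exact add_mem (Finsupp.supported_mono (fun _ h => .inr h) hf)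
    (Finsupp.single_mem_supported _ _ (.inl rfl))

theorem mulWords_tensWords_sub_single_mem {k : Type*} [Field k] {X : Type*} [LinearOrder X]
    {u v : List X} {f g : List X →₀ k}
    (hf : f - Finsupp.single u 1 ∈ Finsupp.supported k k (wordsAbove u))
    (hg : g - Finsupp.single v 1 ∈ Finsupp.supported k k (wordsAbove v)) :
    mulWords (tensWords f g) - Finsupp.single (u ++ v) 1 ∈
      Finsupp.supported k k (wordsAbove (u ++ v)) := by
  have e : mulWords (tensWords f g) - Finsupp.single (u ++ v) 1 =
      mulWords (tensWords (f - Finsupp.single u 1) g) +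
        mulWords (tensWords (Finsupp.single u 1) (g - Finsupp.single v 1)) := by
    have h : mulWords (tensWords (Finsupp.single u (1 : k)) (Finsupp.single v 1)) =
        Finsupp.single (u ++ v) 1 := by
      rw [tensWords, Finsupp.sum_single_index (by simp), Finsupp.sum_single_index (by simp),
        mul_one, mulWords, Finsupp.mapDomain_single]
    rw [tensWords_sub_left, tensWords_sub_right, mulWords_sub, mulWords_sub, h]
    abel
  rw [e]
  refine add_mem
    (mapDomain_mem_supported _ (tensWords_mem_supported hf (mem_supported_wordsFrom hg)) ?_)
    (mapDomain_mem_supported _ (tensWords_mem_supported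
      (Finsupp.single_mem_supported (s := {u}) _ _ rfl) hg) ?_)
  · exact fun p hp => append_mem_wordsAbove_left hp.1 (length_eq_of_mem_wordsFrom hp.2)
  · rintro ⟨_, w⟩ ⟨rfl, hp⟩
    exact append_mem_wordsAbove_right _ hp

theorem braidOne_mem_supported {c : X → X → ((X × X) →₀ k)} (hc : LeftTriangularMat c)
    (v : List X) : ∀ x, braidOne c x v ∈
      Finsupp.supported k k (wordsFrom v ×ˢ {q : List X | q.length = 1}) := by
  induction v with
  | nil =>
    intro x
    rw [braidOne]
    exact Finsupp.single_mem_supported _ _ ⟨.inl rfl, rfl⟩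
  | cons y v ih =>
    intro x
    rw [braidOne]
    refine Finsupp.sum_smul_mem _ _ _ fun p hp => mapDomain_mem_supported _ (ih p.2) ?_
    rintro q ⟨hq₁, hq₂⟩
    refine ⟨?_, hq₂⟩
    rcases hc x y p (Finsupp.mem_support_iff.1 hp) with ⟨h, -⟩ | h
    · rcases hq₁ with hq₁ | hq₁
      · exact .inl (by simp [h, hq₁])
      · exact .inr (by simpa [h] using append_mem_wordsAbove_right [y] hq₁)
    · exact .inr ⟨by simp [length_eq_of_mem_wordsFrom hq₁], .rel h⟩

theorem braidRev_mem_supported {c : X → X → ((X × X) →₀ k)} (hc : LeftTriangularMat c)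
    (u : List X) : ∀ v, braidRev c u v ∈
      Finsupp.supported k k (wordsFrom v ×ˢ {q : List X | q.length = u.length}) := by
  induction u with
  | nil =>
    intro v
    rw [braidRev]
    exact Finsupp.single_mem_supported _ _ ⟨.inl rfl, rfl⟩
  | cons x u ih =>
    intro v
    rw [braidRev]
    refine Finsupp.sum_smul_mem _ _ _ fun p hp => mapDomain_mem_supported _ (ih p.1) ?_
    rintro q ⟨hq₁, hq₂⟩
    have hp' := braidOne_mem_supported hc v x hp
    refine ⟨mem_wordsFrom_trans hp'.1 hq₁, ?_⟩
    have h₁ : p.2.length = 1 := hp'.2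
    have h₂ : q.2.length = u.length := hq₂
    simp [h₁, h₂]

/-- The braided term of the commutator of a Lyndon word `v ++ w` only involves words larger
than `v ++ w`. -/
theorem mulWords_braidExt_mem {c : X → X → ((X × X) →₀ k)} (hc : LeftTriangularMat c)
    {v w : List X} (hlex : List.Lex (· < ·) (v ++ w) w) {f g : List X →₀ k}
    (hf : f ∈ Finsupp.supported k k (wordsFrom v))
    (hg : g ∈ Finsupp.supported k k (wordsFrom w)) :
    mulWords (braidExt c (tensWords f g)) ∈ Finsupp.supported k k (wordsAbove (v ++ w)) := by
  have h : braidExt c (tensWords f g) ∈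
      Finsupp.supported k k (wordsFrom w ×ˢ {q : List X | q.length = v.length}) := by
    refine Finsupp.sum_smul_mem _ _ _ fun p hp => ?_
    have hp' := tensWords_mem_supported hf hg hp
    refine Finsupp.supported_mono ?_ (braidRev_mem_supported hc p.1.reverse p.2)
    rintro q ⟨hq₁, hq₂⟩
    refine ⟨mem_wordsFrom_trans hp'.2 hq₁, ?_⟩
    have h₂ : q.2.length = p.1.reverse.length := hq₂
    simp [h₂, length_eq_of_mem_wordsFrom hp'.1]
  refine mapDomain_mem_supported _ h ?_
  rintro q ⟨hq₁, hq₂⟩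
  have hl := length_eq_of_mem_wordsFrom hq₁
  have h₂ : q.2.length = v.length := hq₂
  refine ⟨by simp [hl, h₂, add_comm], ?_⟩
  have hlt : List.Lex (· < ·) (v ++ w) q.1 := by
    rcases hq₁ with hq₁ | hq₁
    · rwa [hq₁]
    · exact lt_trans (α := List X) hlex hq₁.2
  simpa using lex_append_of_length_le hlt (by simp [hl]) [] q.2

theorem IsBracketing.sub_single_mem_supported {r : X → X → ((X × X) →₀ k)}
    (hr : LeftTriangularMat r) {br : List X → (List X →₀ k)} (hbr : IsBracketing r br)
    (u : List X) :
    br u - Finsupp.single u 1 ∈ Finsupp.supported k k (wordsAbove u) := by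
  induction hn : u.length using Nat.strong_induction_on generalizing u with
  | _ n ih =>
  subst hn
  obtain ⟨hnil, hsingle, hlyndon, hfact⟩ := hbr
  obtain ⟨ls, hls⟩ := exists_isLyndonFactorization u
  match ls, hls with
  | [], ⟨_, _, h⟩ =>
    obtain rfl : [] = u := h
    simp [hnil]
  | [l], ⟨h₁, _, h₃⟩ =>
    obtain rfl : l = u := by simpa using h₃
    have hl : IsLyndon l := h₁ l (by simp)
    by_cases h : 2 ≤ l.length
    · obtain ⟨v, w, hs⟩ := exists_shirshovSplit h
      rw [hlyndon l v w hl hs]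
      obtain ⟨hv, hw, rfl, -, -⟩ := hs
      have hv' := List.length_pos_iff.2 hv
      have hw' := List.length_pos_iff.2 hw
      have iv := ih v.length (by simpa using hw') v rfl
      have iw := ih w.length (by simpa using hv') w rfl
      rw [sub_right_comm]
      exact sub_mem (mulWords_tensWords_sub_single_mem iv iw)
        (mulWords_braidExt_mem hr (hl.2 v w hv hw rfl) (mem_supported_wordsFrom iv)
          (mem_supported_wordsFrom iw))
    · have := List.length_pos_iff.2 hl.1
      obtain ⟨x, rfl⟩ := List.length_eq_one_iff.1 (by omega : l.length = 1)
      simp [hsingle]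
  | l :: m :: ls, hls =>
    rw [hfact l (m :: ls) u (by simp) hls]
    obtain ⟨h₁, -, rfl⟩ := hls
    have hl := List.length_pos_iff.2 (h₁ l (by simp)).1
    have hm := List.length_pos_iff.2 (h₁ m (by simp)).1
    rw [List.flatten_cons]
    refine mulWords_tensWords_sub_single_mem (ih _ ?_ _ rfl) (ih _ ?_ _ rfl)
    · simp only [List.flatten_cons, List.length_append]; omega
    · simp only [List.flatten_cons, List.length_append]; omega

/-- Let `(V, c)` be a finite-dimensional braided vector space, left triangular with
respect to `X`, and let `r` be an admissible endomorphism of `V ⊗ V`.  Then for every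
word `u`, the element `[u]_r` is homogeneous of degree `l(u)` with lexicographically
smallest monomial `u`, with coefficient `1`:
`[u]_r ∈ u + k X^{l(u)}_{> u}`. -/
theorem bracket_smallest_monomial
    (c : X → X → ((X × X) →₀ k))
    (hcbij : Function.Bijective (extendMat c))
    (hcbraid : SatisfiesBraidEq c)
    (hctri : LeftTriangularMat c)
    (r : X → X → ((X × X) →₀ k))
    (hrbraid : SatisfiesBraidEq r)
    (hrtri : LeftTriangularMat r)
    (br : List X → ((List X) →₀ k)) (hbr : IsBracketing r br)
    (u : List X) :
    br u - Finsupp.single u 1 ∈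
      Submodule.span k {f : (List X) →₀ k |
        ∃ w : List X, w.length = u.length ∧ List.Lex (· < ·) u w ∧
          f = Finsupp.single w 1} := by
  have h := hbr.sub_single_mem_supported hrtri u
  rw [Finsupp.supported_eq_span_single] at h
  refine Submodule.span_mono ?_ h
  rintro _ ⟨w, hw, rfl⟩
  exact ⟨w, hw.1, hw.2, rfl⟩
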